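/- For every integer j ≥ 0, the series ∑_{ℓ=0}^{∞} binom(1/2, 2ℓ+j)·binom(2ℓ+j, ℓ+j)·2^{−(2ℓ+j)} converges and its sum equals √(2/π)·binom(1/2, j)·Γ(j+1)/Γ(j+3/2), where binom(1/2, m) = (1/2)(1/2−1)⋯(1/2−m+1)/m! is the generalized binomial coefficient and Γ is the Gamma function. In particular, for j = 0, ∑_{ℓ=0}^{∞} binom(1/2, 2ℓ)·binom(2ℓ, ℓ)·4^{−ℓ} = 2√2/π. -/

import Mathlib

/-!
With `a = j/2 - 1/4`, `b = j/2 + 1/4`, `c = j + 1`, the `ℓ`-th summand equals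
`binom(1/2, j) · 2^(-j)` times the hypergeometric term `u ℓ = (a)_ℓ (b)_ℓ / (ℓ! (c)_ℓ)`
(`summand_eq`). The sum is therefore given by Gauss's theorem
`∑ u ℓ = Γ(c) Γ(c-a-b) / (Γ(c-a) Γ(c-b))` (`hasSum_gauss`); here `c - a - b = 1`, and Legendre's
duplication formula simplifies `Γ(j/2 + 3/4) Γ(j/2 + 5/4)`.

Gauss's theorem is proved by raising `c`. The terms telescope (`hyp_telescope`), so the sum `F(c)`
satisfies `c (c-a-b) F(c) = (c-a) (c-b) F(c+1)` (`tsum_hyp_step`). Iterating, `F(c)` is a finite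
product times `F(c+K)`, where `F(c+K) → 1` (`tendsto_tsum_hyp`) and the product converges to the
quotient of Gamma values by Euler's limit formula (`tendsto_gauss_prod`). Euler's formula also
shows that the terms are `O(n^(-1-(c-a-b)))`, which gives the convergence.
-/

open Real

/-- The generalized binomial coefficient
`binom(a, m) = a·(a−1)⋯(a−m+1)/m!` for a real `a` and `m ∈ ℕ`. -/
noncomputable def genBinom (a : ℝ) (m : ℕ) : ℝ :=
  (∏ i ∈ Finset.range m, (a - (i : ℝ))) / (Nat.factorial m : ℝ)

open Filter Topology

/-- The rising factorial `(a)_n = a (a+1) ⋯ (a+n-1)`. -/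
noncomputable def poch (a : ℝ) (n : ℕ) : ℝ := ∏ i ∈ Finset.range n, (a + (i : ℝ))

/-- The `n`-th term `(a)_n (b)_n / (n! (c)_n)` of the hypergeometric series `₂F₁(a, b; c; 1)`,
with `n!` written as `(1)_n`. -/
noncomputable def hyp (a b c : ℝ) (n : ℕ) : ℝ := poch a n * poch b n / (poch 1 n * poch c n)

lemma poch_zero (a : ℝ) : poch a 0 = 1 := by simp [poch]

lemma poch_succ (a : ℝ) (n : ℕ) : poch a (n + 1) = poch a n * (a + n) := by
  simp [poch, Finset.prod_range_succ]

lemma poch_pos {a : ℝ} (ha : 0 < a) (n : ℕ) : 0 < poch a n :=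
  Finset.prod_pos fun i _ => by positivity

lemma poch_ne_zero {a : ℝ} (ha : ∀ m : ℕ, a ≠ -m) (n : ℕ) : poch a n ≠ 0 :=
  Finset.prod_ne_zero_iff.2 fun i _ h => ha i (by linarith)

lemma ne_neg_nat {a : ℝ} (ha : 0 < a) (m : ℕ) : a ≠ -m := by
  have : (0 : ℝ) ≤ m := m.cast_nonneg
  linarith

lemma poch_shift (c : ℝ) (n : ℕ) : c * poch (c + 1) n = poch c n * (c + n) := by
  induction n with
  | zero => simp [poch]
  | succ n ih =>
    rw [poch_succ, poch_succ, ← mul_assoc, ih]; push_cast; ring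

lemma hyp_succ (a b : ℝ) {c : ℝ} (hc : 0 < c) (n : ℕ) :
    hyp a b c (n + 1) = hyp a b c n * ((a + n) * (b + n) / ((1 + n) * (c + n))) := by
  have := (poch_pos hc n).ne'
  have := (poch_pos one_pos n).ne'
  have : c + n ≠ 0 := by positivity
  have : (1 : ℝ) + n ≠ 0 := by positivity
  simp only [hyp, poch_succ]
  field_simp

lemma hyp_shift (a b : ℝ) {c : ℝ} (hc : 0 < c) (n : ℕ) :
    hyp a b (c + 1) n = hyp a b c n * (c / (c + n)) := by
  have h := poch_shift c n
  have := (poch_pos hc n).ne'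
  have := (poch_pos one_pos n).ne'
  have : c + n ≠ 0 := by positivity
  have h' : poch (c + 1) n = poch c n * (c + n) / c := by
    field_simp; linarith
  simp only [hyp, h']
  field_simp

/-- The certificate behind Gauss's contiguous relation in `c`: the difference of the two sides is
the increment of `-c n u_n`. -/
lemma hyp_telescope (a b : ℝ) {c : ℝ} (hc : 0 < c) (n : ℕ) :
    c * (c - a - b) * hyp a b c n - (c - a) * (c - b) * hyp a b (c + 1) n =
      -c * ((n + 1 : ℕ) * hyp a b c (n + 1)) - -c * (n * hyp a b c n) := by
  have : c + n ≠ 0 := by positivity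
  have : (1 : ℝ) + n ≠ 0 := by positivity
  rw [hyp_succ a b hc, hyp_shift a b hc]
  push_cast
  field_simp
  ring

lemma poch_eq_gammaSeq {a : ℝ} (ha : ∀ m : ℕ, a ≠ -m) {n : ℕ} (hn : 0 < n) :
    poch a (n + 1) = (n : ℝ) ^ a * n.factorial / Real.GammaSeq a n := by
  have h := poch_ne_zero ha (n + 1)
  have h1 : (n : ℝ) ^ a ≠ 0 := by positivity
  have h2 : (n.factorial : ℝ) ≠ 0 := by positivity
  rw [Real.GammaSeq]
  change _ = _ / (_ / poch a (n + 1))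
  field_simp

lemma gammaSeq_ne_zero {a : ℝ} (ha : ∀ m : ℕ, a ≠ -m) {n : ℕ} (hn : 0 < n) :
    Real.GammaSeq a n ≠ 0 := by
  have h := poch_ne_zero ha (n + 1)
  have h1 : (n : ℝ) ^ a ≠ 0 := by positivity
  have h2 : (n.factorial : ℝ) ≠ 0 := by positivity
  exact div_ne_zero (mul_ne_zero h1 h2) h

/-- A balanced quotient of rising factorials, in terms of Euler's approximations of `Γ`. -/
lemma poch_quot {a b c d : ℝ} (ha : ∀ m : ℕ, a ≠ -m) (hb : ∀ m : ℕ, b ≠ -m)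
    (hc : ∀ m : ℕ, c ≠ -m) (hd : ∀ m : ℕ, d ≠ -m) {n : ℕ} (hn : 0 < n) :
    poch a (n + 1) * poch b (n + 1) / (poch d (n + 1) * poch c (n + 1)) =
      (n : ℝ) ^ (a + b - d - c) * (Real.GammaSeq d n * Real.GammaSeq c n /
        (Real.GammaSeq a n * Real.GammaSeq b n)) := by
  have hn' : (0 : ℝ) < n := by positivity
  rw [poch_eq_gammaSeq ha hn, poch_eq_gammaSeq hb hn, poch_eq_gammaSeq hc hn,
    poch_eq_gammaSeq hd hn, Real.rpow_sub hn', Real.rpow_sub hn', Real.rpow_add hn']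
  have := gammaSeq_ne_zero ha hn
  have := gammaSeq_ne_zero hb hn
  have := gammaSeq_ne_zero hc hn
  have := gammaSeq_ne_zero hd hn
  have h2 : (n.factorial : ℝ) ≠ 0 := by positivity
  have := (Real.rpow_pos_of_pos hn' c).ne'
  have := (Real.rpow_pos_of_pos hn' d).ne'
  field_simp

lemma tendsto_gammaSeq_quot {a b : ℝ} (c d : ℝ) (ha : ∀ m : ℕ, a ≠ -m) (hb : ∀ m : ℕ, b ≠ -m) :
    Tendsto (fun n => Real.GammaSeq d n * Real.GammaSeq c n /
        (Real.GammaSeq a n * Real.GammaSeq b n)) atTop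
      (𝓝 (Real.Gamma d * Real.Gamma c / (Real.Gamma a * Real.Gamma b))) :=
  ((Real.GammaSeq_tendsto_Gamma d).mul (Real.GammaSeq_tendsto_Gamma c)).div
    ((Real.GammaSeq_tendsto_Gamma a).mul (Real.GammaSeq_tendsto_Gamma b))
    (mul_ne_zero (Real.Gamma_ne_zero ha) (Real.Gamma_ne_zero hb))

lemma summable_hyp {a b c : ℝ} (ha : ∀ m : ℕ, a ≠ -m) (hb : ∀ m : ℕ, b ≠ -m) (hc : 0 < c)
    (hd : 0 < c - a - b) : Summable (hyp a b c) := by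
  rw [← summable_nat_add_iff 1]
  refine summable_of_isBigO_nat (g := fun n : ℕ => (n : ℝ) ^ (a + b - 1 - c))
    (Real.summable_nat_rpow.2 (by linarith)) ?_
  have h := (Asymptotics.isBigO_refl (fun n : ℕ => (n : ℝ) ^ (a + b - 1 - c)) atTop).mul
    ((tendsto_gammaSeq_quot c 1 ha hb).isBigO_one ℝ)
  simp only [mul_one] at h
  refine h.congr' ?_ EventuallyEq.rfl
  filter_upwards [eventually_gt_atTop 0] with n hn
  exact (poch_quot ha hb (ne_neg_nat hc) (ne_neg_nat one_pos) hn).symm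

lemma tendsto_nat_mul_hyp {a b c : ℝ} (ha : ∀ m : ℕ, a ≠ -m) (hb : ∀ m : ℕ, b ≠ -m)
    (hc : 0 < c) (hd : 0 < c - a - b) :
    Tendsto (fun n : ℕ => (n : ℝ) * hyp a b c n) atTop (𝓝 0) := by
  rw [← tendsto_add_atTop_iff_nat 1]
  -- `(n + 1) u_(n+1)` is split as `n u_(n+1) + u_(n+1)`, since `poch_quot` has powers of `n`.
  have h0 : Tendsto (fun n => hyp a b c (n + 1)) atTop (𝓝 0) :=
    (tendsto_add_atTop_iff_nat 1).2 (summable_hyp ha hb hc hd).tendsto_atTop_zero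
  have h1 : Tendsto (fun n : ℕ => (n : ℝ) ^ (-(c - a - b))) atTop (𝓝 0) :=
    (tendsto_rpow_neg_atTop hd).comp tendsto_natCast_atTop_atTop
  have h2 := (h1.mul (tendsto_gammaSeq_quot c 1 ha hb))
  have h3 : Tendsto (fun n : ℕ => (n : ℝ) * hyp a b c (n + 1)) atTop (𝓝 0) := by
    rw [zero_mul] at h2
    refine h2.congr' ?_
    filter_upwards [eventually_gt_atTop 0] with n hn
    have hn' : (0 : ℝ) < n := by positivity
    rw [hyp, poch_quot ha hb (ne_neg_nat hc) (ne_neg_nat one_pos) hn, ← mul_assoc]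
    congr 1
    rw [show -(c - a - b) = 1 + (a + b - 1 - c) by ring, Real.rpow_add hn', Real.rpow_one]
  have h4 := h3.add h0
  rw [add_zero] at h4
  refine h4.congr fun n => ?_
  push_cast
  ring

/-- Gauss's contiguous relation `c (c-a-b) F(c) = (c-a) (c-b) F(c+1)`. -/
lemma tsum_hyp_step {a b c : ℝ} (ha : ∀ m : ℕ, a ≠ -m) (hb : ∀ m : ℕ, b ≠ -m) (hc : 0 < c)
    (hd : 0 < c - a - b) :
    c * (c - a - b) * ∑' n, hyp a b c n = (c - a) * (c - b) * ∑' n, hyp a b (c + 1) n := by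
  have s1 := (summable_hyp ha hb hc hd).hasSum.mul_left (c * (c - a - b))
  have s2 := (summable_hyp ha hb (c := c + 1) (by linarith) (by linarith)).hasSum.mul_left
    ((c - a) * (c - b))
  have h := (s1.sub s2).tendsto_sum_nat
  simp only [hyp_telescope a b hc] at h
  have h' := (tendsto_nat_mul_hyp ha hb hc hd).const_mul (-c)
  have h2 : Tendsto (fun N => ∑ n ∈ Finset.range N, (-c * ((n + 1 : ℕ) * hyp a b c (n + 1)) -
      -c * (n * hyp a b c n))) atTop (𝓝 0) := by
    refine Tendsto.congr (fun N => (Finset.sum_range_sub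
      (fun n : ℕ => -c * ((n : ℝ) * hyp a b c n)) N).symm) ?_
    simpa using h'
  have h3 := tendsto_nhds_unique h h2
  linarith

lemma tsum_hyp_iterate {a b c : ℝ} (ha : ∀ m : ℕ, a ≠ -m) (hb : ∀ m : ℕ, b ≠ -m) (hc : 0 < c)
    (hd : 0 < c - a - b) (K : ℕ) :
    ∑' n, hyp a b c n = poch (c - a) K * poch (c - b) K / (poch (c - a - b) K * poch c K) *
      ∑' n, hyp a b (c + K) n := by
  induction K with
  | zero => simp [poch_zero]
  | succ K ih =>
    have hK : (0 : ℝ) ≤ K := K.cast_nonneg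
    have h := tsum_hyp_step ha hb (c := c + K) (by linarith) (by linarith)
    have e1 : c + K ≠ 0 := by positivity
    have e2 : c - a - b + K ≠ 0 := by positivity
    have := (poch_pos hc K).ne'
    have := (poch_pos hd K).ne'
    have h' : ∑' n, hyp a b (c + K) n = (c - a + K) * (c - b + K) / ((c - a - b + K) * (c + K)) *
        ∑' n, hyp a b (c + (K + 1 : ℕ)) n := by
      push_cast
      rw [← add_assoc]
      field_simp
      linear_combination h
    rw [ih, h']
    simp only [poch_succ]
    field_simp

lemma tendsto_gauss_prod {a b c : ℝ} (hca : 0 < c - a) (hcb : 0 < c - b) (hc : 0 < c)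
    (hd : 0 < c - a - b) :
    Tendsto (fun K => poch (c - a) K * poch (c - b) K / (poch (c - a - b) K * poch c K)) atTop
      (𝓝 (Real.Gamma (c - a - b) * Real.Gamma c / (Real.Gamma (c - a) * Real.Gamma (c - b)))) := by
  rw [← tendsto_add_atTop_iff_nat 1]
  refine (tendsto_gammaSeq_quot c (c - a - b) (ne_neg_nat hca) (ne_neg_nat hcb)).congr' ?_
  filter_upwards [eventually_gt_atTop 0] with n hn
  rw [poch_quot (ne_neg_nat hca) (ne_neg_nat hcb) (ne_neg_nat hc) (ne_neg_nat hd) hn,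
    show c - a + (c - b) - (c - a - b) - c = 0 by ring, Real.rpow_zero, one_mul]

/-- Every term of positive index decays at least like `1 / (c + K)` when `c` is raised by `K`;
this gives both a dominating series and the termwise limit. -/
lemma abs_hyp_add_le (a b : ℝ) {c : ℝ} (hc : 0 < c) (n K : ℕ) :
    |hyp a b (c + K) (n + 1)| ≤ c / (c + K) * |hyp a b c (n + 1)| := by
  induction K with
  | zero => simp [hc.ne']
  | succ K ih =>
    have hcK : 0 < c + K := by positivity
    have h1 : 0 < c + K + (n + 1 : ℕ) := by positivity
    have e : c / (c + (K + 1 : ℕ)) = c / (c + K) * ((c + K) / (c + K + 1)) := by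
      push_cast
      field_simp
      ring
    rw [e, Nat.cast_succ, ← add_assoc, hyp_shift a b hcK, abs_mul, abs_of_pos (div_pos hcK h1)]
    calc _ ≤ (c / (c + K) * |hyp a b c (n + 1)|) * ((c + K) / (c + K + 1)) := by
          gcongr
          push_cast
          linarith [(n.cast_nonneg : (0 : ℝ) ≤ n)]
      _ = _ := by ring

lemma tendsto_tsum_hyp {a b c : ℝ} (ha : ∀ m : ℕ, a ≠ -m) (hb : ∀ m : ℕ, b ≠ -m) (hc : 0 < c)
    (hd : 0 < c - a - b) :
    Tendsto (fun K : ℕ => ∑' n, hyp a b (c + K) n) atTop (𝓝 1) := by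
  have hs := (summable_nat_add_iff 1).2 (summable_hyp ha hb hc hd)
  have hlim : Tendsto (fun K : ℕ => c / (c + K)) atTop (𝓝 0) :=
    tendsto_const_nhds.div_atTop (tendsto_atTop_add_const_left _ _ tendsto_natCast_atTop_atTop)
  have h : Tendsto (fun K : ℕ => ∑' n, hyp a b (c + K) (n + 1)) atTop (𝓝 (∑' _ : ℕ, (0 : ℝ))) := by
    refine tendsto_tsum_of_dominated_convergence hs.abs (fun n => ?_) (.of_forall fun K n => ?_)
    · refine squeeze_zero_norm (fun K => abs_hyp_add_le a b hc n K) ?_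
      simpa using hlim.mul_const |hyp a b c (n + 1)|
    · refine (abs_hyp_add_le a b hc n K).trans (mul_le_of_le_one_left (abs_nonneg _) ?_)
      exact div_le_one_of_le₀ (by simp) (by positivity)
  rw [tsum_zero] at h
  have h1 := h.const_add 1
  rw [add_zero] at h1
  refine h1.congr fun K => ?_
  have hK : (0 : ℝ) ≤ K := K.cast_nonneg
  rw [(summable_hyp ha hb (c := c + K) (by linarith) (by linarith)).tsum_eq_zero_add]
  simp [hyp, poch_zero]

/-- Gauss's summation theorem for `₂F₁(a, b; c; 1)`. -/
lemma hasSum_gauss {a b c : ℝ} (ha : ∀ m : ℕ, a ≠ -m) (hb : ∀ m : ℕ, b ≠ -m) (hc : 0 < c)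
    (hca : 0 < c - a) (hcb : 0 < c - b) (hd : 0 < c - a - b) :
    HasSum (hyp a b c)
      (Real.Gamma (c - a - b) * Real.Gamma c / (Real.Gamma (c - a) * Real.Gamma (c - b))) := by
  have h := (tendsto_gauss_prod hca hcb hc hd).mul (tendsto_tsum_hyp ha hb hc hd)
  rw [mul_one] at h
  have h' := tendsto_nhds_unique
    (tendsto_const_nhds.congr fun K => tsum_hyp_iterate ha hb hc hd K) h
  rw [← h']
  exact (summable_hyp ha hb hc hd).hasSum

lemma genBinom_succ (x : ℝ) (m : ℕ) :
    genBinom x (m + 1) = genBinom x m * ((x - m) / (m + 1)) := by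
  have : (m.factorial : ℝ) ≠ 0 := by positivity
  simp only [genBinom, Finset.prod_range_succ, Nat.factorial_succ]
  push_cast
  field_simp

lemma summand_eq (j ℓ : ℕ) :
    genBinom (1 / 2) (2 * ℓ + j) * (Nat.choose (2 * ℓ + j) (ℓ + j) : ℝ) * (1 / 2 ^ (2 * ℓ + j)) =
      genBinom (1 / 2) j / 2 ^ j * hyp (j / 2 - 1 / 4) (j / 2 + 1 / 4) (j + 1) ℓ := by
  have key (ℓ : ℕ) : (Nat.choose (2 * ℓ + j) (ℓ + j) : ℝ) =
      (2 * ℓ + j).factorial / ((ℓ + j).factorial * ℓ.factorial) := by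
    rw [Nat.cast_choose ℝ (by omega), show 2 * ℓ + j - (ℓ + j) = ℓ by omega]
  induction ℓ with
  | zero => simp [hyp, poch_zero, div_eq_mul_inv]
  | succ ℓ ih =>
    rw [hyp_succ _ _ (by positivity), ← mul_assoc, ← ih, key, key,
      show 2 * (ℓ + 1) + j = 2 * ℓ + j + 1 + 1 by ring, show ℓ + 1 + j = ℓ + j + 1 by ring,
      genBinom_succ, genBinom_succ]
    simp only [Nat.factorial_succ, pow_succ]
    have : ((2 * ℓ + j).factorial : ℝ) ≠ 0 := by positivity
    have : ((ℓ + j).factorial : ℝ) ≠ 0 := by positivity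
    have : (ℓ.factorial : ℝ) ≠ 0 := by positivity
    push_cast
    field_simp
    ring

/-- Gauss's theorem with `c - a - b = 1`; the factor `2^(j + 1/2) / √π` from the duplication formula
cancels the `2^(-j)` of `summand_eq` up to `√(2/π)`. -/
lemma hasSum_main (j : ℕ) :
    HasSum (fun ℓ : ℕ => genBinom (1 / 2) (2 * ℓ + j) * (Nat.choose (2 * ℓ + j) (ℓ + j) : ℝ) *
        (1 / 2 ^ (2 * ℓ + j)))
      (Real.sqrt (2 / π) * genBinom (1 / 2) j * Real.Gamma ((j : ℝ) + 1) /
        Real.Gamma ((j : ℝ) + 3 / 2)) := by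
  simp only [summand_eq]
  have hj : (0 : ℝ) ≤ j := j.cast_nonneg
  have ha : ∀ m : ℕ, (j / 2 - 1 / 4 : ℝ) ≠ -m := by
    intro m h
    have h1 : (2 * j + 4 * m : ℝ) = 1 := by linarith
    have h2 : 2 * j + 4 * m = 1 := by exact_mod_cast h1
    omega
  have hg := (hasSum_gauss (a := j / 2 - 1 / 4) (b := j / 2 + 1 / 4) (c := j + 1) ha
    (ne_neg_nat (by linarith)) (by linarith) (by linarith) (by linarith) (by linarith)).mul_left
    (genBinom (1 / 2) j / 2 ^ j)
  refine Eq.subst (motive := fun x => HasSum _ x) (Eq.symm ?_) hg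
  have hdup := Real.Gamma_mul_Gamma_add_half ((j : ℝ) / 2 + 3 / 4)
  rw [show (j : ℝ) + 1 - (j / 2 - 1 / 4) - (j / 2 + 1 / 4) = 1 by ring,
    show (j : ℝ) + 1 - (j / 2 - 1 / 4) = j / 2 + 3 / 4 + 1 / 2 by ring,
    show (j : ℝ) + 1 - (j / 2 + 1 / 4) = j / 2 + 3 / 4 by ring, Real.Gamma_one,
    mul_comm (Real.Gamma (_ + 1 / 2)), hdup,
    show 2 * ((j : ℝ) / 2 + 3 / 4) = j + 3 / 2 by ring,
    show 1 - ((j : ℝ) + 3 / 2) = -(j + 1 / 2) by ring, Real.rpow_neg two_pos.le,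
    Real.rpow_add two_pos, Real.rpow_natCast, ← Real.sqrt_eq_rpow, Real.sqrt_div two_pos.le]
  have : Real.Gamma ((j : ℝ) + 3 / 2) ≠ 0 := (Real.Gamma_pos_of_pos (by positivity)).ne'
  have : √π ≠ 0 := (Real.sqrt_pos.2 Real.pi_pos).ne'
  have : √(2 : ℝ) ≠ 0 := by positivity
  field_simp

/-- `∑_{ℓ=0}^{∞} binom(1/2, 2ℓ+j)·binom(2ℓ+j, ℓ+j)·2^{−(2ℓ+j)}
  = √(2/π)·binom(1/2, j)·Γ(j+1)/Γ(j+3/2)` for every `j ≥ 0`; in particular, for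
`j = 0`, `∑_{ℓ} binom(1/2, 2ℓ)·C(2ℓ, ℓ)·4^{−ℓ} = 2√2/π`. -/
theorem stmt_16 (j : ℕ) :
    HasSum (fun ℓ : ℕ => genBinom (1 / 2) (2 * ℓ + j) * (Nat.choose (2 * ℓ + j) (ℓ + j) : ℝ) *
        (1 / 2 ^ (2 * ℓ + j)))
      (Real.sqrt (2 / π) * genBinom (1 / 2) j * Real.Gamma ((j : ℝ) + 1) /
        Real.Gamma ((j : ℝ) + 3 / 2)) ∧
    HasSum (fun ℓ : ℕ => genBinom (1 / 2) (2 * ℓ) * (Nat.choose (2 * ℓ) ℓ : ℝ) * (1 / 4 ^ ℓ))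
      (2 * Real.sqrt 2 / π) := by
  refine ⟨hasSum_main j, ?_⟩
  have h := hasSum_main 0
  simp only [add_zero, pow_mul] at h
  norm_num at h
  convert h using 1
  · simp
  · have h32 : Real.Gamma (3 / 2) = √π / 2 := by
      rw [show (3 / 2 : ℝ) = 1 / 2 + 1 by norm_num, Real.Gamma_add_one (by norm_num),
        Real.Gamma_one_half_eq]
      ring
    have : √π ≠ 0 := (Real.sqrt_pos.2 Real.pi_pos).ne'
    have hpi : √π ^ 2 = π := Real.sq_sqrt Real.pi_pos.le
    simp only [h32, genBinom, Finset.range_zero, Finset.prod_empty, Nat.factorial_zero]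
    nth_rewrite 1 [← hpi]
    push_cast
    field_simp
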